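/- (Growth of the quartic interaction coefficients A and B) For all i, j, l, m ∈ ℕ, |∫₀^{π/2} (e_i'(x)/ω_i)·(e_j'(x)/ω_j)·e_l(x)·(∫_x^{π/2} e_m(y)·sin(y)·cos(y) dy)·tan²(x) dx| ≤ (4/√π)·ω_l/ω_m and |∫₀^{π/2} e_i(x)·e_j(x)·e_l(x)·(∫_x^{π/2} e_m(y)·sin(y)·cos(y) dy)·tan²(x) dx| ≤ (4/√π)·ω_l/ω_m; i.e. the Fourier constants A_{ijl}^{(m)} and B_{ijl}^{(m)} are O(ω_l/ω_m). -/

import Mathlib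

open Real MeasureTheory

/-- The AdS linearized eigenvalue `ω_j = 2j + 3`. -/
noncomputable def ω (j : ℕ) : ℝ := 2 * j + 3

/-- The AdS linearized eigenfunction
`e_j(x) = (2/√π)·(ω_j² − 1)^(−1/2)·(ω_j·sin(ω_j x)/tan x − cos(ω_j x))`. -/
noncomputable def e (j : ℕ) (x : ℝ) : ℝ :=
  (2 / Real.sqrt Real.pi) * (Real.sqrt (ω j ^ 2 - 1))⁻¹ *
    (ω j * Real.sin (ω j * x) / Real.tan x - Real.cos (ω j * x))

/-- The derivative of the AdS linearized eigenfunction,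
`e_j'(x) = (2/√π)·ω_j·(ω_j² − 1)^(−1/2)·(ω_j·cos(ω_j x)/tan x − sin(ω_j x)/tan² x)`. -/
noncomputable def e' (j : ℕ) (x : ℝ) : ℝ :=
  (2 / Real.sqrt Real.pi) * ω j * (Real.sqrt (ω j ^ 2 - 1))⁻¹ *
    (ω j * Real.cos (ω j * x) / Real.tan x - Real.sin (ω j * x) / Real.tan x ^ 2)

lemma om_ge (j : ℕ) : 3 ≤ ω j := by
  unfold ω
  have : (0 : ℝ) ≤ j := Nat.cast_nonneg j
  linarith

lemma abs_sin_nat_mul (n : ℕ) (x : ℝ) : |sin (n * x)| ≤ n * |sin x| := by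
  induction n with
  | zero => simp
  | succ n ih =>
    have h : ((n + 1 : ℕ) : ℝ) * x = n * x + x := by push_cast; ring
    rw [h, sin_add]
    calc |sin (n * x) * cos x + cos (n * x) * sin x|
        ≤ |sin (n * x) * cos x| + |cos (n * x) * sin x| := abs_add_le _ _
      _ ≤ |sin (n * x)| * 1 + 1 * |sin x| := by
          rw [abs_mul, abs_mul]
          gcongr
          · exact abs_cos_le_one _
          · exact abs_cos_le_one _
      _ ≤ _ := by push_cast; linarith

lemma cos_odd (k : ℕ) : cos ((2 * k + 1) * (π / 2)) = 0 := by
  have : ((2 * k + 1) * (π / 2) : ℝ) = π / 2 + k * π := by ring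
  rw [this, cos_add_nat_mul_pi]; simp

lemma cos_om (j : ℕ) : cos (ω j * (π / 2)) = 0 := by
  have := cos_odd (j + 1)
  unfold ω
  push_cast at this
  rw [← this]; congr 1; ring

lemma cos_om_add (j : ℕ) : cos ((ω j + 2) * (π / 2)) = 0 := by
  have := cos_odd (j + 2)
  unfold ω
  push_cast at this
  rw [← this]; congr 1; ring

lemma cos_om_sub (j : ℕ) : cos ((ω j - 2) * (π / 2)) = 0 := by
  have := cos_odd j
  unfold ω
  rw [← this]; congr 1; ring

lemma sin_om_sq (j : ℕ) : sin (ω j * (π / 2)) ^ 2 = 1 := by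
  have := sin_sq_add_cos_sq (ω j * (π / 2))
  rw [cos_om] at this
  linarith

noncomputable def cc (j : ℕ) : ℝ := (2 / √π) * (√(ω j ^ 2 - 1))⁻¹

lemma cc_nonneg (j : ℕ) : 0 ≤ cc j := by unfold cc; positivity

lemma cc_sq (j : ℕ) : cc j ^ 2 * ((ω j ^ 2 - 1) * (π / 4)) = 1 := by
  have h := om_ge j
  have h1 : 0 < ω j ^ 2 - 1 := by nlinarith
  unfold cc
  rw [mul_pow, div_pow, inv_pow, sq_sqrt pi_pos.le, sq_sqrt h1.le]
  field_simp
  norm_num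

lemma cc_eq (j : ℕ) : cc j * (ω j ^ 2 - 1) = (2 / √π) * √(ω j ^ 2 - 1) := by
  have h := om_ge j
  have h1 : 0 < ω j ^ 2 - 1 := by nlinarith
  have h2 := sqrt_pos.2 h1
  have h3 := sq_sqrt h1.le
  unfold cc
  rw [mul_assoc]; congr 1
  field_simp
  linarith

lemma e_bound (l : ℕ) (x : ℝ) (hx : x ∈ Set.Ioo 0 (π / 2)) :
    |e l x| ≤ (2 / √π) * √(ω l ^ 2 - 1) := by
  have hs : 0 < sin x := sin_pos_of_pos_of_lt_pi hx.1 (by linarith [hx.2, pi_pos])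
  have hc : 0 < cos x := cos_pos_of_mem_Ioo ⟨by linarith [hx.1, pi_pos], hx.2⟩
  have h3 := om_ge l
  have key : ω l * sin (ω l * x) / tan x - cos (ω l * x)
      = (ω l - 1) * cos (ω l * x) + ω l * (sin ((ω l - 1) * x) / sin x) := by
    have : (ω l - 1) * x = ω l * x - x := by ring
    rw [this, sin_sub, tan_eq_sin_div_cos]
    field_simp
    ring
  have hb : |sin ((ω l - 1) * x) / sin x| ≤ ω l - 1 := by
    have h := abs_sin_nat_mul (2 * l + 2) x
    have h2 : ((2 * l + 2 : ℕ) : ℝ) = ω l - 1 := by unfold ω; push_cast; ring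
    rw [h2, abs_of_pos hs] at h
    rw [abs_div, abs_of_pos hs, div_le_iff₀ hs]
    exact h
  have : e l x = cc l * (ω l * sin (ω l * x) / tan x - cos (ω l * x)) := rfl
  rw [this, abs_mul, abs_of_nonneg (cc_nonneg l), ← cc_eq, key]
  refine mul_le_mul_of_nonneg_left ?_ (cc_nonneg l)
  have hcs := abs_le.1 (abs_cos_le_one (ω l * x))
  have hb' := abs_le.1 hb
  rw [abs_le]
  constructor <;> nlinarith

lemma inner_eq (m : ℕ) (x : ℝ) (hx : x ∈ Set.Ioo 0 (π / 2)) :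
    (∫ y in Set.Ioo x (π / 2), e m y * sin y * cos y) =
      cc m * ((1 / 2) * cos (ω m * x) + (ω m - 1) / (4 * (ω m + 2)) * cos ((ω m + 2) * x)
        + (ω m + 1) / (4 * (ω m - 2)) * cos ((ω m - 2) * x)) := by
  have h3 := om_ge m
  have e1 : (∫ y in Set.Ioo x (π / 2), e m y * sin y * cos y) =
      ∫ y in Set.Ioo x (π / 2), cc m * ((ω m) / 2 * sin (ω m * y)
        + (ω m - 1) / 4 * sin ((ω m + 2) * y) + (ω m + 1) / 4 * sin ((ω m - 2) * y)) := by
    refine setIntegral_congr_fun measurableSet_Ioo ?_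
    intro y hy
    have hs : 0 < sin y := sin_pos_of_pos_of_lt_pi (hx.1.trans hy.1) (by linarith [hy.2, pi_pos])
    have hc : 0 < cos y := cos_pos_of_mem_Ioo ⟨by linarith [hx.1, hy.1, pi_pos], hy.2⟩
    have : e m y = cc m * (ω m * sin (ω m * y) / tan y - cos (ω m * y)) := rfl
    simp only [this]
    have a1 : (ω m + 2) * y = ω m * y + 2 * y := by ring
    have a2 : (ω m - 2) * y = ω m * y - 2 * y := by ring
    rw [a1, a2, sin_add, sin_sub, sin_two_mul, cos_two_mul, tan_eq_sin_div_cos]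
    field_simp
    ring
  rw [e1, ← integral_Ioc_eq_integral_Ioo, ← intervalIntegral.integral_of_le hx.2.le]
  have hd : ∀ y ∈ Set.uIcc x (π / 2), HasDerivAt (fun y => -(cc m * ((1 / 2) * cos (ω m * y)
      + (ω m - 1) / (4 * (ω m + 2)) * cos ((ω m + 2) * y)
        + (ω m + 1) / (4 * (ω m - 2)) * cos ((ω m - 2) * y))))
      (cc m * ((ω m) / 2 * sin (ω m * y)
        + (ω m - 1) / 4 * sin ((ω m + 2) * y) + (ω m + 1) / 4 * sin ((ω m - 2) * y))) y := by
    intro y _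
    have hl : ∀ a : ℝ, HasDerivAt (fun y => cos (a * y)) (-sin (a * y) * (a * 1)) y := fun a =>
      ((hasDerivAt_id y).const_mul a).cos
    have hh := ((((hl (ω m)).const_mul (1 / 2)).add
      ((hl (ω m + 2)).const_mul ((ω m - 1) / (4 * (ω m + 2))))).add
      ((hl (ω m - 2)).const_mul ((ω m + 1) / (4 * (ω m - 2))))).const_mul (cc m) |>.neg
    refine hh.congr_deriv ?_
    have p1 : ω m + 2 ≠ 0 := by linarith
    have p2 : ω m - 2 ≠ 0 := by linarith
    field_simp
    ring
  rw [intervalIntegral.integral_eq_sub_of_hasDerivAt hd]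
  · rw [cos_om, cos_om_add, cos_om_sub]; ring
  · apply Continuous.intervalIntegrable; fun_prop

lemma inner_bound (m : ℕ) (x : ℝ) (hx : x ∈ Set.Ioo 0 (π / 2)) :
    |∫ y in Set.Ioo x (π / 2), e m y * sin y * cos y| ≤
      (2 / √π) * √(ω m ^ 2 - 1) / (ω m ^ 2 - 4) := by
  have h3 := om_ge m
  have h4 : 0 < ω m ^ 2 - 4 := by nlinarith
  rw [inner_eq m x hx, abs_mul, abs_of_nonneg (cc_nonneg m), ← cc_eq, mul_div_assoc]
  refine mul_le_mul_of_nonneg_left ?_ (cc_nonneg m)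
  have e1 : (ω m ^ 2 - 1) / (ω m ^ 2 - 4)
      = 1 / 2 + (ω m - 1) / (4 * (ω m + 2)) + (ω m + 1) / (4 * (ω m - 2)) := by
    have p1 : ω m + 2 ≠ 0 := by linarith
    have p2 : ω m - 2 ≠ 0 := by linarith
    have : ω m ^ 2 - 4 = (ω m + 2) * (ω m - 2) := by ring
    rw [this]
    field_simp
    ring
  rw [e1]
  have q1 : 0 ≤ (ω m - 1) / (4 * (ω m + 2)) := div_nonneg (by linarith) (by linarith)
  have q2 : 0 ≤ (ω m + 1) / (4 * (ω m - 2)) := div_nonneg (by linarith) (by linarith)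
  have c1 := abs_le.1 (abs_cos_le_one (ω m * x))
  have c2 := abs_le.1 (abs_cos_le_one ((ω m + 2) * x))
  have c3 := abs_le.1 (abs_cos_le_one ((ω m - 2) * x))
  rw [abs_le]
  constructor <;> nlinarith

lemma const_bound (l m : ℕ) :
    ((2 / √π) * √(ω l ^ 2 - 1)) * ((2 / √π) * √(ω m ^ 2 - 1) / (ω m ^ 2 - 4))
      ≤ (4 / √π) * (ω l / ω m) := by
  have hl := om_ge l
  have hm := om_ge m
  have h4 : 0 < ω m ^ 2 - 4 := by nlinarith
  have hp : 0 < √π := sqrt_pos.2 pi_pos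
  have a1 : √(ω l ^ 2 - 1) ≤ ω l := by
    rw [sqrt_le_left (by linarith)]; linarith
  have a2 : ω m * √(ω m ^ 2 - 1) ≤ √π * (ω m ^ 2 - 4) := by
    refine abs_le_of_sq_le_sq' ?_ (by positivity) |>.2
    rw [mul_pow, mul_pow, sq_sqrt pi_pos.le, sq_sqrt (by nlinarith)]
    have ht : 9 ≤ ω m ^ 2 := by nlinarith
    generalize ω m ^ 2 = t at *
    have := pi_gt_three
    nlinarith [mul_nonneg (sub_nonneg.2 this.le) (sq_nonneg (t - 4))]
  have e1 : ((2 / √π) * √(ω l ^ 2 - 1)) * ((2 / √π) * √(ω m ^ 2 - 1) / (ω m ^ 2 - 4))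
      = (4 / √π) * (√(ω l ^ 2 - 1) * ((√(ω m ^ 2 - 1)) / (√π * (ω m ^ 2 - 4)))) := by
    field_simp
    ring
  rw [e1]
  refine mul_le_mul_of_nonneg_left ?_ (by positivity)
  rw [div_eq_mul_inv (ω l)]
  refine mul_le_mul a1 ?_ (by positivity) (by linarith)
  rw [div_le_iff₀ (by positivity), inv_mul_eq_div, le_div_iff₀ (by linarith)]
  linarith

noncomputable def gg (j : ℕ) (x : ℝ) : ℝ :=
  (ω j * cos (ω j * x) - sin (ω j * x) * (cos x / sin x)) ^ 2

noncomputable def FF (j : ℕ) (x : ℝ) : ℝ :=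
  -(sin (ω j * x) ^ 2 * (cos x / sin x)) + (ω j ^ 2 - 1) * (x / 2)
    + (ω j ^ 2 + 1) / (4 * ω j) * sin (2 * ω j * x)

lemma FF_deriv (j : ℕ) (x : ℝ) (hx : x ∈ Set.Ioo 0 (π / 2)) : HasDerivAt (FF j) (gg j x) x := by
  have hs : 0 < sin x := sin_pos_of_pos_of_lt_pi hx.1 (by linarith [hx.2, pi_pos])
  have h3 := om_ge j
  have d1 : HasDerivAt (fun x => sin (ω j * x)) (cos (ω j * x) * (ω j * 1)) x :=
    ((hasDerivAt_id x).const_mul (ω j)).sin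
  have d2 : HasDerivAt (fun x => sin (2 * ω j * x)) (cos (2 * ω j * x) * (2 * ω j * 1)) x :=
    ((hasDerivAt_id x).const_mul (2 * ω j)).sin
  have d3 := (hasDerivAt_cos x).div (hasDerivAt_sin x) hs.ne'
  have d4 := (((d1.pow 2).mul d3).neg.add
    (((hasDerivAt_id x).div_const 2).const_mul (ω j ^ 2 - 1))).add
    (d2.const_mul ((ω j ^ 2 + 1) / (4 * ω j)))
  refine HasDerivAt.congr_deriv (f := FF j) d4 ?_
  unfold gg
  have a : 2 * ω j * x = 2 * (ω j * x) := by ring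
  have hS := sin_sq_add_cos_sq (ω j * x)
  have hs2 := sin_sq_add_cos_sq x
  simp only [Pi.div_apply, Pi.pow_apply]
  rw [a, cos_two_mul]
  have hq : (-sin x * sin x - cos x * cos x) / sin x ^ 2 = -1 - (cos x / sin x) ^ 2 := by
    field_simp
  rw [hq]
  have hC : cos (ω j * x) ^ 2 = 1 - sin (ω j * x) ^ 2 := by linarith
  have hw : (ω j ^ 2 + 1) / (4 * ω j) * ((2 * cos (ω j * x) ^ 2 - 1) * (2 * ω j * 1))
    = (ω j ^ 2 + 1) / 2 * (2 * cos (ω j * x) ^ 2 - 1) := by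
    field_simp
    ring
  rw [hw]
  push_cast
  simp only [Nat.add_one_sub_one, pow_one]
  linear_combination hS

lemma FF_cont (j : ℕ) : ContinuousOn (FF j) (Set.Icc 0 (π / 2)) := by
  intro x hx
  rcases eq_or_lt_of_le hx.1 with h0 | h0
  · subst h0
    apply ContinuousAt.continuousWithinAt
    have hA : ContinuousAt (fun x => sin (ω j * x) ^ 2 * (cos x / sin x)) 0 := by
      unfold ContinuousAt
      simp only [mul_zero, sin_zero, ne_eq, OfNat.ofNat_ne_zero, not_false_eq_true, zero_pow,
        zero_mul]
      have hlim : Filter.Tendsto (fun x => ω j * |sin (ω j * x)|) (nhds 0) (nhds 0) := by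
        have : Continuous (fun x => ω j * |sin (ω j * x)|) := by fun_prop
        have := this.tendsto 0
        simpa using this
      refine squeeze_zero_norm ?_ hlim
      intro x
      have h3 := om_ge j
      have hb := abs_sin_nat_mul (2 * j + 3) x
      have h2 : ((2 * j + 3 : ℕ) : ℝ) = ω j := by unfold ω; push_cast; ring
      rw [h2] at hb
      rw [Real.norm_eq_abs, abs_mul, abs_div, abs_pow]
      by_cases hs : sin x = 0
      · simp only [hs, abs_zero, div_zero, mul_zero]; positivity
      have hs' : 0 < |sin x| := abs_pos.2 hs
      rw [← mul_div_assoc, div_le_iff₀ hs']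
      have hc := abs_cos_le_one x
      have n1 := abs_nonneg (sin (ω j * x))
      calc |sin (ω j * x)| ^ 2 * |cos x| ≤ |sin (ω j * x)| ^ 2 * 1 := by gcongr
        _ = |sin (ω j * x)| * |sin (ω j * x)| := by ring
        _ ≤ |sin (ω j * x)| * (ω j * |sin x|) := by gcongr
        _ = _ := by ring
    unfold FF
    refine (hA.neg.add ?_).add ?_
    · fun_prop
    · fun_prop
  · have hs : 0 < sin x := sin_pos_of_pos_of_lt_pi h0 (by linarith [hx.2, pi_pos])
    apply ContinuousAt.continuousWithinAt
    unfold FF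
    have : ContinuousAt (fun x => cos x / sin x) x :=
      continuous_cos.continuousAt.div continuous_sin.continuousAt hs.ne'
    fun_prop

lemma gg_int (j : ℕ) : IntervalIntegrable (gg j) volume 0 (π / 2) ∧
    ∫ x in (0 : ℝ)..(π / 2), gg j x = (ω j ^ 2 - 1) * (π / 4) := by
  have hp : (0 : ℝ) ≤ π / 2 := by positivity
  have hI : IntervalIntegrable (gg j) volume 0 (π / 2) := by
    rw [intervalIntegrable_iff_integrableOn_Ioc_of_le hp]
    exact intervalIntegral.integrableOn_deriv_of_nonneg (FF_cont j) (FF_deriv j)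
      (fun x _ => sq_nonneg _)
  refine ⟨hI, ?_⟩
  rw [intervalIntegral.integral_eq_sub_of_hasDerivAt_of_le hp (FF_cont j) (FF_deriv j) hI]
  have a : 2 * ω j * (π / 2) = 2 * (ω j * (π / 2)) := by ring
  unfold FF
  rw [a, sin_two_mul, cos_om, cos_pi_div_two]
  simp only [mul_zero, sin_zero, zero_div, div_zero]
  ring

lemma e'_norm (j : ℕ) : IntegrableOn (fun x => (e' j x / ω j) ^ 2 * tan x ^ 2)
      (Set.Ioo 0 (π / 2)) ∧
    ∫ x in Set.Ioo 0 (π / 2), (e' j x / ω j) ^ 2 * tan x ^ 2 = 1 := by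
  have hp : (0 : ℝ) ≤ π / 2 := by positivity
  have hc : Set.EqOn (fun x => cc j ^ 2 * gg j x) (fun x => (e' j x / ω j) ^ 2 * tan x ^ 2)
      (Set.Ioo 0 (π / 2)) := by
    intro x hx
    have hs : 0 < sin x := sin_pos_of_pos_of_lt_pi hx.1 (by linarith [hx.2, pi_pos])
    have hc : 0 < cos x := cos_pos_of_mem_Ioo ⟨by linarith [hx.1, pi_pos], hx.2⟩
    have h3 := om_ge j
    have h0 : ω j ≠ 0 := by linarith
    have : e' j x / ω j = cc j * (ω j * cos (ω j * x) / tan x - sin (ω j * x) / tan x ^ 2) := by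
      unfold e' cc
      generalize (√(ω j ^ 2 - 1))⁻¹ = z
      field_simp
    simp only [this, gg]
    rw [← mul_pow, ← mul_pow, tan_eq_sin_div_cos]
    congr 1
    field_simp
  obtain ⟨h1, h2⟩ := gg_int j
  constructor
  · refine IntegrableOn.congr_fun ?_ hc measurableSet_Ioo
    rw [intervalIntegrable_iff_integrableOn_Ioo_of_le hp] at h1
    exact h1.const_mul _
  · rw [← setIntegral_congr_fun measurableSet_Ioo hc, integral_const_mul,
      ← integral_Ioc_eq_integral_Ioo, ← intervalIntegral.integral_of_le hp, h2, cc_sq]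

lemma e_norm (j : ℕ) : IntegrableOn (fun x => (e j x) ^ 2 * tan x ^ 2)
      (Set.Ioo 0 (π / 2)) ∧
    ∫ x in Set.Ioo 0 (π / 2), (e j x) ^ 2 * tan x ^ 2 = 1 := by
  have hp : (0 : ℝ) ≤ π / 2 := by positivity
  have hc : Set.EqOn (fun x => cc j ^ 2 * gg j (π / 2 - x)) (fun x => (e j x) ^ 2 * tan x ^ 2)
      (Set.Ioo 0 (π / 2)) := by
    intro x hx
    have hs : 0 < sin x := sin_pos_of_pos_of_lt_pi hx.1 (by linarith [hx.2, pi_pos])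
    have hc : 0 < cos x := cos_pos_of_mem_Ioo ⟨by linarith [hx.1, pi_pos], hx.2⟩
    have : e j x = cc j * (ω j * sin (ω j * x) / tan x - cos (ω j * x)) := rfl
    have a : ω j * (π / 2 - x) = ω j * (π / 2) - ω j * x := by ring
    simp only [this, gg]
    rw [a, cos_sub, sin_sub, cos_om, cos_pi_div_two_sub, sin_pi_div_two_sub]
    have e1 : (ω j * (0 * cos (ω j * x) + sin (ω j * (π / 2)) * sin (ω j * x)) -
        (sin (ω j * (π / 2)) * cos (ω j * x) - 0 * sin (ω j * x)) * (sin x / cos x)) ^ 2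
        = sin (ω j * (π / 2)) ^ 2 *
          (ω j * sin (ω j * x) - cos (ω j * x) * (sin x / cos x)) ^ 2 := by ring
    rw [e1, sin_om_sq, one_mul, ← mul_pow, ← mul_pow, tan_eq_sin_div_cos]
    congr 1
    field_simp
  obtain ⟨h1, h2⟩ := gg_int j
  constructor
  · refine IntegrableOn.congr_fun ?_ hc measurableSet_Ioo
    have h3 := (h1.comp_sub_left (π / 2)).symm
    simp only [sub_self, sub_zero] at h3
    rw [intervalIntegrable_iff_integrableOn_Ioo_of_le hp] at h3
    exact h3.const_mul _
  · rw [← setIntegral_congr_fun measurableSet_Ioo hc, integral_const_mul,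
      ← integral_Ioc_eq_integral_Ioo, ← intervalIntegral.integral_of_le hp,
      intervalIntegral.integral_comp_sub_left (fun x => gg j x)]
    simp only [sub_self, sub_zero]
    rw [h2, cc_sq]

lemma final_bound (l m : ℕ) (f g : ℝ → ℝ)
    (hf : IntegrableOn (fun x => f x ^ 2 * tan x ^ 2) (Set.Ioo 0 (π / 2)) ∧
      ∫ x in Set.Ioo 0 (π / 2), f x ^ 2 * tan x ^ 2 = 1)
    (hg : IntegrableOn (fun x => g x ^ 2 * tan x ^ 2) (Set.Ioo 0 (π / 2)) ∧
      ∫ x in Set.Ioo 0 (π / 2), g x ^ 2 * tan x ^ 2 = 1) :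
    |∫ x in Set.Ioo (0 : ℝ) (π / 2), f x * g x * e l x *
          (∫ y in Set.Ioo x (π / 2), e m y * sin y * cos y) * tan x ^ 2|
      ≤ (4 / √π) * (ω l / ω m) := by
  have hI := (hf.1.add hg.1).const_mul ((4 / √π) * (ω l / ω m) / 2)
  have hv : ∫ x in Set.Ioo 0 (π / 2), ((4 / √π) * (ω l / ω m) / 2) *
      (((fun x => f x ^ 2 * tan x ^ 2) + fun x => g x ^ 2 * tan x ^ 2) x)
      = (4 / √π) * (ω l / ω m) := by
    rw [integral_const_mul]
    simp only [Pi.add_apply]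
    rw [integral_add hf.1 hg.1, hf.2, hg.2]
    ring
  rw [← Real.norm_eq_abs]
  refine (norm_integral_le_of_norm_le hI ?_).trans hv.le
  refine (ae_restrict_iff' measurableSet_Ioo).2 (Filter.Eventually.of_forall ?_)
  intro x hx
  have b := (mul_le_mul (e_bound l x hx) (inner_bound m x hx) (abs_nonneg _)
    (by positivity)).trans (const_bound l m)
  rw [← abs_mul] at b
  generalize (∫ y in Set.Ioo x (π / 2), e m y * sin y * cos y) = J at *
  generalize (4 / √π) * (ω l / ω m) = M at *
  have hab : |f x * g x| ≤ (f x ^ 2 + g x ^ 2) / 2 := by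
    rw [abs_le]; constructor <;> nlinarith [sq_nonneg (f x + g x), sq_nonneg (f x - g x)]
  have : f x * g x * e l x * J * tan x ^ 2 = (f x * g x) * (e l x * J) * tan x ^ 2 := by ring
  rw [this, Real.norm_eq_abs, abs_mul, abs_mul, abs_of_nonneg (sq_nonneg (tan x))]
  calc |f x * g x| * |e l x * J| * tan x ^ 2
      ≤ ((f x ^ 2 + g x ^ 2) / 2) * M * tan x ^ 2 := by gcongr
    _ = _ := by simp only [Pi.add_apply]; ring

/-- Growth of the quartic interaction coefficients `A` and `B`: for all `i, j, l, m ∈ ℕ`,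
`|A_{ijl}^{(m)}| ≤ (4/√π)·ω_l/ω_m` and `|B_{ijl}^{(m)}| ≤ (4/√π)·ω_l/ω_m`, i.e. these
Fourier constants are `O(ω_l/ω_m)`. -/
theorem quartic_interaction_coefficients_A_B_growth (i j l m : ℕ) :
    |∫ x in Set.Ioo (0 : ℝ) (Real.pi / 2),
        (e' i x / ω i) * (e' j x / ω j) * e l x *
          (∫ y in Set.Ioo x (Real.pi / 2), e m y * Real.sin y * Real.cos y) *
            Real.tan x ^ 2| ≤ (4 / Real.sqrt Real.pi) * (ω l / ω m) ∧
    |∫ x in Set.Ioo (0 : ℝ) (Real.pi / 2),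
        e i x * e j x * e l x *
          (∫ y in Set.Ioo x (Real.pi / 2), e m y * Real.sin y * Real.cos y) *
            Real.tan x ^ 2| ≤ (4 / Real.sqrt Real.pi) * (ω l / ω m) := by
  exact ⟨final_bound l m (fun x => e' i x / ω i) (fun x => e' j x / ω j) (e'_norm i) (e'_norm j),
    final_bound l m (e i) (e j) (e_norm i) (e_norm j)⟩
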